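/- Let A₅ ⊂ S₅ act on homogeneous cubic forms in ℂ[x₀, x₁, x₂, x₃] through the pentahedral action, where a permutation σ of the five linear forms ℓ₀ = x₀, ℓ₁ = x₁, ℓ₂ = x₂, ℓ₃ = x₃, ℓ₄ = −(x₀ + x₁ + x₂ + x₃) acts by the corresponding linear substitution of variables. Then the subspace of degree-3 forms invariant under every even permutation is one-dimensional, spanned by f₀ = x₀³ + x₁³ + x₂³ + x₃³ − (x₀ + x₁ + x₂ + x₃)³. -/

import Mathlib

open MvPolynomial

noncomputable section

/-- The five linear forms of the pentahedron: `ℓ₀ = x₀, ℓ₁ = x₁, ℓ₂ = x₂, ℓ₃ = x₃,`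
`ℓ₄ = -(x₀ + x₁ + x₂ + x₃)`; they satisfy `ℓ₀ + ℓ₁ + ℓ₂ + ℓ₃ + ℓ₄ = 0`. -/
def pentForm : Fin 5 → MvPolynomial (Fin 4) ℂ :=
  ![X 0, X 1, X 2, X 3, -(X 0 + X 1 + X 2 + X 3)]

/-- The pentahedral action of a permutation `σ ∈ S₅` on polynomials in `x₀, …, x₃`:
the linear substitution of the variables sending `ℓᵢ` to `ℓ_{σ(i)}` for all `i`. -/
def pentAct (σ : Equiv.Perm (Fin 5)) :
    MvPolynomial (Fin 4) ℂ →ₐ[ℂ] MvPolynomial (Fin 4) ℂ :=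
  aeval fun i : Fin 4 => pentForm (σ i.castSucc)

/-- `f₀ = x₀³ + x₁³ + x₂³ + x₃³ - (x₀ + x₁ + x₂ + x₃)³`, the Clebsch cubic. -/
def clebsch : MvPolynomial (Fin 4) ℂ :=
  X 0 ^ 3 + X 1 ^ 3 + X 2 ^ 3 + X 3 ^ 3 - (X 0 + X 1 + X 2 + X 3) ^ 3

theorem pentForm_sum : ∑ i, pentForm i = 0 := by
  simp [Fin.sum_univ_five, pentForm]

theorem clebsch_eq : clebsch = ∑ i, pentForm i ^ 3 := by
  simp [Fin.sum_univ_five, pentForm, clebsch]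
  ring

theorem pentAct_pentForm (σ : Equiv.Perm (Fin 5)) (i : Fin 5) :
    pentAct σ (pentForm i) = pentForm (σ i) := by
  have h : ∀ j : Fin 4, pentAct σ (pentForm j.castSucc) = pentForm (σ j.castSucc) := by
    intro j
    have : pentForm j.castSucc = X j := by fin_cases j <;> rfl
    rw [this, pentAct, aeval_X]
  refine Fin.lastCases ?_ h i
  have h1 := congrArg (pentAct σ) pentForm_sum
  rw [map_sum, map_zero, Fin.sum_univ_castSucc, Finset.sum_congr rfl (fun j _ => h j)] at h1
  have h2 : ∑ i, pentForm (σ i) = 0 := by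
    rw [Equiv.sum_comp σ pentForm, pentForm_sum]
  rw [Fin.sum_univ_castSucc] at h2
  exact add_left_cancel (h1.trans h2.symm)

theorem pentAct_clebsch (σ : Equiv.Perm (Fin 5)) : pentAct σ clebsch = clebsch := by
  rw [clebsch_eq, map_sum]
  simp only [map_pow, pentAct_pentForm]
  exact Equiv.sum_comp σ (fun i => pentForm i ^ 3)

theorem clebsch_hom : clebsch.IsHomogeneous 3 := by
  have h : ∀ i : Fin 4, ((X i : MvPolynomial (Fin 4) ℂ)).IsHomogeneous 1 :=
    fun i => isHomogeneous_X _ _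
  have h3 : ∀ i : Fin 4, ((X i : MvPolynomial (Fin 4) ℂ) ^ 3).IsHomogeneous 3 :=
    fun i => (h i).pow 3
  exact ((((h3 0).add (h3 1)).add (h3 2)).add (h3 3)).sub
    (((((h 0).add (h 1)).add (h 2)).add (h 3)).pow 3)

theorem clebsch_ne_zero : clebsch ≠ 0 := by
  intro h
  have := congrArg (eval ![1, 1, 0, 0]) h
  simp [clebsch] at this
  norm_num at this

/-- The symmetrised product of three of the five linear forms. -/
def symProd (i j k : Fin 5) : MvPolynomial (Fin 4) ℂ :=
  ∑ σ : alternatingGroup (Fin 5),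
    pentForm (σ.1 i) * pentForm (σ.1 j) * pentForm (σ.1 k)

theorem symProd_act (τ : Equiv.Perm (Fin 5)) (hτ : τ ∈ alternatingGroup (Fin 5))
    (i j k : Fin 5) : symProd (τ i) (τ j) (τ k) = symProd i j k := by
  unfold symProd
  exact Equiv.sum_comp (Equiv.mulRight (⟨τ, hτ⟩ : alternatingGroup (Fin 5)))
    (fun σ => pentForm (σ.1 i) * pentForm (σ.1 j) * pentForm (σ.1 k))

theorem symProd_sum (i j : Fin 5) : ∑ k, symProd i j k = 0 := by
  unfold symProd
  rw [Finset.sum_comm]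
  refine Finset.sum_eq_zero fun σ _ => ?_
  rw [← Finset.mul_sum, Equiv.sum_comp σ.1 pentForm, pentForm_sum, mul_zero]

theorem symProd_swap (i j k : Fin 5) : symProd i j k = symProd j i k :=
  Finset.sum_congr rfl fun σ _ => by ring

theorem symProd_rot (i j k : Fin 5) : symProd i j k = symProd k i j :=
  Finset.sum_congr rfl fun σ _ => by ring

/-- The alternating group is 3-transitive on five letters. -/
theorem exists_even (i j k : Fin 5) (hij : i ≠ j) (hik : i ≠ k) (hjk : j ≠ k) :
    ∃ τ ∈ alternatingGroup (Fin 5), τ 0 = i ∧ τ 1 = j ∧ τ 2 = k := by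
  obtain ⟨τ, h0, h1, h2⟩ : ∃ τ : Equiv.Perm (Fin 5), τ 0 = i ∧ τ 1 = j ∧ τ 2 = k := by
    let a : Equiv.Perm (Fin 5) := Equiv.swap 0 i
    have a0 : a 0 = i := Equiv.swap_apply_left _ _
    let b : Equiv.Perm (Fin 5) := Equiv.swap (a 1) j * a
    have hi : i ≠ a 1 := by rw [← a0]; exact a.injective.ne (by decide)
    have b0 : b 0 = i := by
      rw [Equiv.Perm.mul_apply, a0, Equiv.swap_apply_of_ne_of_ne hi hij]
    have b1 : b 1 = j := by rw [Equiv.Perm.mul_apply, Equiv.swap_apply_left]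
    have hi2 : i ≠ b 2 := by rw [← b0]; exact b.injective.ne (by decide)
    have hj2 : j ≠ b 2 := by rw [← b1]; exact b.injective.ne (by decide)
    refine ⟨Equiv.swap (b 2) k * b, ?_, ?_, ?_⟩
    · rw [Equiv.Perm.mul_apply, b0, Equiv.swap_apply_of_ne_of_ne hi2 hik]
    · rw [Equiv.Perm.mul_apply, b1, Equiv.swap_apply_of_ne_of_ne hj2 hjk]
    · rw [Equiv.Perm.mul_apply, Equiv.swap_apply_left]
  by_cases h : τ ∈ alternatingGroup (Fin 5)
  · exact ⟨τ, h, h0, h1, h2⟩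
  · refine ⟨τ * Equiv.swap 3 4, ?_, ?_, ?_, ?_⟩
    · rw [Equiv.Perm.mem_alternatingGroup] at h ⊢
      have h' := (Int.units_eq_one_or (Equiv.Perm.sign τ)).resolve_left h
      rw [Equiv.Perm.sign_mul, h', Equiv.Perm.sign_swap (by decide)]
      rfl
    · simpa [Equiv.swap_apply_of_ne_of_ne] using h0
    · rw [Equiv.Perm.mul_apply, Equiv.swap_apply_of_ne_of_ne (by decide) (by decide), h1]
    · rw [Equiv.Perm.mul_apply, Equiv.swap_apply_of_ne_of_ne (by decide) (by decide), h2]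

theorem symProd_distinct (i j k : Fin 5) (hij : i ≠ j) (hik : i ≠ k) (hjk : j ≠ k) :
    symProd i j k = symProd 0 1 2 := by
  obtain ⟨τ, hτ, rfl, rfl, rfl⟩ := exists_even i j k hij hik hjk
  exact symProd_act τ hτ _ _ _

theorem symProd_two (i j : Fin 5) (hij : i ≠ j) :
    symProd i i j = symProd 0 0 1 := by
  obtain ⟨k, hk⟩ : ∃ k, i ≠ k ∧ j ≠ k := by revert i j; decide
  obtain ⟨τ, hτ, rfl, rfl, rfl⟩ := exists_even i j k hij hk.1 hk.2
  exact symProd_act τ hτ _ _ _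

theorem symProd_one (i : Fin 5) : symProd i i i = symProd 0 0 0 := by
  obtain ⟨j, k, h⟩ : ∃ j k, i ≠ j ∧ i ≠ k ∧ j ≠ k := by revert i; decide
  obtain ⟨τ, hτ, rfl, rfl, rfl⟩ := exists_even i j k h.1 h.2.1 h.2.2
  exact symProd_act τ hτ _ _ _

/-- The line spanned by the Clebsch cubic. -/
def clebschLine : Submodule ℂ (MvPolynomial (Fin 4) ℂ) := Submodule.span ℂ {clebsch}

theorem mem_of_smul_mem (c : ℂ) (hc : c ≠ 0) (f : MvPolynomial (Fin 4) ℂ)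
    (h : c • f ∈ clebschLine) : f ∈ clebschLine :=
  (clebschLine.smul_mem_iff hc).1 h

theorem symProd_mem_one : symProd 0 0 0 ∈ clebschLine := by
  refine mem_of_smul_mem 5 (by norm_num) _ ?_
  have h1 : ∑ i, symProd i i i =
      (Fintype.card (alternatingGroup (Fin 5)) : ℂ) • clebsch := by
    unfold symProd
    rw [Finset.sum_comm, Nat.cast_smul_eq_nsmul, ← Finset.card_univ, ← Finset.sum_const]
    refine Finset.sum_congr rfl fun σ _ => ?_
    rw [clebsch_eq, ← Equiv.sum_comp σ.1 (fun i => pentForm i ^ 3)]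
    exact Finset.sum_congr rfl fun i _ => by ring
  have h2 : (5 : ℂ) • symProd 0 0 0 = ∑ i, symProd i i i := by
    simp only [symProd_one, Finset.sum_const, Finset.card_univ, Fintype.card_fin]
    rw [← Nat.cast_smul_eq_nsmul ℂ]
    norm_num
  rw [h2, h1]
  exact clebschLine.smul_mem _ (Submodule.mem_span_singleton_self _)

theorem symProd_mem_two : symProd 0 0 1 ∈ clebschLine := by
  refine mem_of_smul_mem 4 (by norm_num) _ ?_
  have h := symProd_sum 0 0
  rw [Fin.sum_univ_five, symProd_two 0 2 (by decide), symProd_two 0 3 (by decide),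
    symProd_two 0 4 (by decide)] at h
  have h2 : (4 : ℂ) • symProd 0 0 1 = -symProd 0 0 0 := by
    rw [← sub_eq_zero, ← h]
    module
  rw [h2]
  exact clebschLine.neg_mem symProd_mem_one

theorem symProd_mem_three : symProd 0 1 2 ∈ clebschLine := by
  refine mem_of_smul_mem 3 (by norm_num) _ ?_
  have h := symProd_sum 0 1
  rw [Fin.sum_univ_five, symProd_distinct 0 1 3 (by decide) (by decide) (by decide),
    symProd_distinct 0 1 4 (by decide) (by decide) (by decide),
    symProd_rot 0 1 0, symProd_rot 0 1 1, symProd_rot 1 0 1,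
    symProd_two 1 0 (by decide)] at h
  have h2 : (3 : ℂ) • symProd 0 1 2 = -((2 : ℂ) • symProd 0 0 1) := by
    rw [← sub_eq_zero, ← h]
    module
  rw [h2]
  exact clebschLine.neg_mem (clebschLine.smul_mem _ symProd_mem_two)

theorem symProd_mem (i j k : Fin 5) : symProd i j k ∈ clebschLine := by
  by_cases hij : i = j
  · subst hij
    by_cases hik : i = k
    · subst hik
      rw [symProd_one]; exact symProd_mem_one
    · rw [symProd_two i k hik]; exact symProd_mem_two
  · by_cases hik : i = k
    · subst hik
      rw [symProd_rot, symProd_two i j hij]; exact symProd_mem_two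
    · by_cases hjk : j = k
      · subst hjk
        rw [symProd_rot, symProd_rot, symProd_two j i (Ne.symm hij)]; exact symProd_mem_two
      · rw [symProd_distinct i j k hij hik hjk]; exact symProd_mem_three

/-- Summation over the alternating group. -/
def avg : MvPolynomial (Fin 4) ℂ →ₗ[ℂ] MvPolynomial (Fin 4) ℂ :=
  ∑ σ : alternatingGroup (Fin 5), (pentAct σ.1).toLinearMap

theorem avg_monomial (d : Fin 4 →₀ ℕ) (c : ℂ) (hd : d.degree = 3) :
    avg (monomial d c) ∈ clebschLine := by
  have hcard : Multiset.card d.toMultiset = 3 := by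
    rw [Finsupp.card_toMultiset, ← hd]; rfl
  obtain ⟨i, j, k, h⟩ := Multiset.card_eq_three.1 hcard
  have hd' : d = Finsupp.single i 1 + Finsupp.single j 1 + Finsupp.single k 1 := by
    apply Multiset.toFinsupp.symm.injective
    change d.toMultiset = Finsupp.toMultiset _
    rw [h]
    simp [Finsupp.toMultiset_single]
  have hm : monomial d c = c • (pentForm i.castSucc * pentForm j.castSucc *
      pentForm k.castSucc) := by
    have hX : ∀ j : Fin 4, pentForm j.castSucc = X j := by
      intro j; fin_cases j <;> rfl
    rw [hX, hX, hX, hd']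
    simp [X, monomial_mul, smul_monomial]
  rw [hm, map_smul]
  refine clebschLine.smul_mem _ ?_
  have : avg (pentForm i.castSucc * pentForm j.castSucc * pentForm k.castSucc) =
      symProd i.castSucc j.castSucc k.castSucc := by
    simp [avg, symProd, LinearMap.sum_apply, pentAct_pentForm]
  rw [this]
  exact symProd_mem _ _ _

theorem avg_mem (f : MvPolynomial (Fin 4) ℂ) (hf : f.IsHomogeneous 3) :
    avg f ∈ clebschLine := by
  rw [f.as_sum, map_sum]
  refine clebschLine.sum_mem fun d hd => avg_monomial d _ ?_
  have := hf (mem_support_iff.1 hd)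
  rw [Finsupp.degree_eq_weight_one]
  exact this

/-- The space of cubic forms invariant under the pentahedral action of every even
permutation in `S₅` is one-dimensional, spanned by the Clebsch cubic `f₀`. -/
theorem A5_invariant_cubics_eq_span_clebsch :
    clebsch ≠ 0 ∧
    {f : MvPolynomial (Fin 4) ℂ | f.IsHomogeneous 3 ∧
        ∀ σ ∈ alternatingGroup (Fin 5), pentAct σ f = f} =
      Set.range fun c : ℂ => c • clebsch := by
  refine ⟨clebsch_ne_zero, Set.Subset.antisymm ?_ ?_⟩
  · rintro f ⟨hf, hinv⟩
    have h1 : avg f = (Fintype.card (alternatingGroup (Fin 5)) : ℂ) • f := by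
      rw [avg, LinearMap.sum_apply, Nat.cast_smul_eq_nsmul, ← Finset.card_univ,
        ← Finset.sum_const]
      exact Finset.sum_congr rfl fun σ _ => hinv σ.1 σ.2
    have h2 := avg_mem f hf
    rw [h1] at h2
    exact Submodule.mem_span_singleton.1
      (mem_of_smul_mem _ (Nat.cast_ne_zero.2 Fintype.card_ne_zero) f h2)
  · rintro _ ⟨c, rfl⟩
    refine ⟨?_, fun σ _ => ?_⟩
    · exact (homogeneousSubmodule (Fin 4) ℂ 3).smul_mem c clebsch_hom
    · simp only [map_smul, pentAct_clebsch]
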